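/- One has lim_{n→∞} (log|ℓ_n|)/n = lim_{n→∞} (log|ℓ̃_n|)/n = log μ2, where μ2 is the unique root of μ^3+2368μ^2−752μ−16 lying in the interval (0.337, 0.338) (numerically log μ2 = −1.08607936…). -/

import Mathlib

noncomputable section

open Filter


/-- `a₀(n)` from recursion (1). -/
def a0 (x : ℚ) : ℚ := 41218*x^3 - 48459*x^2 + 20010*x - 2871

/-- `a₁(n)` from recursion (1). -/
def a1 (x : ℚ) : ℚ := 2*(48802112*x^9 + 89030880*x^8 + 36002654*x^7 - 24317344*x^6
  - 19538418*x^5 + 1311365*x^4 + 3790503*x^3 + 460056*x^2 - 271701*x - 60291)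

/-- `a₂(n)` from recursion (1). -/
def a2 (x : ℚ) : ℚ := 3874492*x^8 - 2617900*x^7 - 3144314*x^6 + 2947148*x^5
  + 647130*x^4 - 1182926*x^3 + 115771*x^2 + 170716*x - 44541

/-- The third-order difference equation (1), imposed for all integers `n ≥ 2`. -/
def Rec1 (y : ℕ → ℚ) : Prop := ∀ n : ℕ, 2 ≤ n →
  ((n : ℚ) + 1)^6 * a0 (n : ℚ) * y (n+1) + a1 (n : ℚ) * y n
    - 4*(2*(n : ℚ) - 1) * a2 (n : ℚ) * y (n-1)
    - 4*((n : ℚ) - 1)^4*(2*(n : ℚ) - 1)*(2*(n : ℚ) - 3) * a0 ((n : ℚ) + 1) * y (n-2) = 0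

/-- The (real) value of the Riemann zeta function at a natural number argument. -/
def zetaRe (s : ℕ) : ℝ := (riemannZeta s).re

/-!
The very-well-poised series `r n = ∑ t, (2 t + n) * n!⁴ * (t-1)⋯(t-n) * (t+1)⋯(t+2n)
/ (t⁶ * ((t+1)⋯(t+n))⁷)` satisfies, by creative telescoping, a recursion of order three with
characteristic polynomial `λ³ - 188 λ² - 2368 λ + 4`. Comparing initial values, `r n` equals
`u n * ζ(5) + w n * ζ(3) - v n`, where `u`, `w`, `v` are rational solutions of the same recursion.

A weighted sum of the Casorati minors of two solutions satisfies `Rec1`. Being bilinear and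
alternating, it eliminates one zeta value from `r`: pairing `r` with `w` gives `q ζ(5) - p`, and
pairing `u` with `r` gives `q ζ(3) - p̃`. Here `r` is recessive, its consecutive quotients tending
to the small positive root `l` of the characteristic polynomial, while those of `u` and `w` tend
to the large root `s`. Hence the quotients of both linear forms tend to `l * s = μ₂`.
-/

section RatioLimit

variable {𝕜 : Type*} [NormedField 𝕜] {f g : ℕ → 𝕜} {μ ν : 𝕜}

/-- The consecutive quotients of `f` tend to `μ`. Since `x / 0 = 0`, this with `μ ≠ 0` forces
`f` to be eventually nonzero. -/
def HasRatioLimit (f : ℕ → 𝕜) (μ : 𝕜) : Prop :=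
  Tendsto (fun n => f (n + 1) / f n) atTop (nhds μ)

namespace HasRatioLimit

theorem congr' (hf : HasRatioLimit f μ) (hfg : f =ᶠ[atTop] g) : HasRatioLimit g μ := by
  refine Tendsto.congr' ?_ hf
  filter_upwards [hfg, (tendsto_add_atTop_nat 1).eventually hfg] with n hn hn'
  rw [hn, hn']

theorem mul (hf : HasRatioLimit f μ) (hg : HasRatioLimit g ν) :
    HasRatioLimit (fun n => f n * g n) (μ * ν) :=
  (Tendsto.mul hf hg).congr fun _ => div_mul_div_comm _ _ _ _

theorem of_tendsto {c : 𝕜} (hf : Tendsto f atTop (nhds c)) (hc : c ≠ 0) : HasRatioLimit f 1 := by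
  have h := (hf.comp (tendsto_add_atTop_nat 1)).div hf hc
  rwa [div_self hc] at h

theorem natCast_sq : HasRatioLimit (fun n : ℕ => (n : ℝ) ^ 2) 1 := by
  have h := ((tendsto_one_div_atTop_nhds_zero_nat (𝕜 := ℝ)).const_add 1).pow 2
  rw [add_zero, one_pow] at h
  refine h.congr' ?_
  filter_upwards [eventually_ne_atTop 0] with n hn
  have hn' : (n : ℝ) ≠ 0 := Nat.cast_ne_zero.mpr hn
  push_cast
  field_simp

theorem eventually_ne_zero (hf : HasRatioLimit f μ) (hμ : μ ≠ 0) : ∀ᶠ n in atTop, f n ≠ 0 := by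
  filter_upwards [Tendsto.eventually_ne hf hμ] with n hn hfn
  exact hn (by rw [hfn, div_zero])

theorem two_step (hf : HasRatioLimit f μ) (hμ : μ ≠ 0) :
    Tendsto (fun n => f (n + 2) / f n) atTop (nhds (μ ^ 2)) := by
  rw [sq]
  refine (Tendsto.mul (hf.comp (tendsto_add_atTop_nat 1)) hf).congr' ?_
  filter_upwards [(tendsto_add_atTop_nat 1).eventually (hf.eventually_ne_zero hμ)] with n hn
  exact div_mul_div_cancel₀ hn

theorem of_inv {f : ℕ → ℝ} {μ : ℝ}
    (hf : Tendsto (fun n => f n / f (n + 1)) atTop (nhds μ⁻¹)) (hμ : μ ≠ 0) :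
    HasRatioLimit f μ := by
  simpa only [HasRatioLimit, inv_div, inv_inv] using hf.inv₀ (inv_ne_zero hμ)

theorem tendsto_log_norm_div (hf : HasRatioLimit f μ) (hμ : μ ≠ 0) :
    Tendsto (fun n : ℕ => Real.log ‖f n‖ / n) atTop (nhds (Real.log ‖μ‖)) := by
  have hlog : Tendsto (fun n => Real.log ‖f (n + 1) / f n‖) atTop (nhds (Real.log ‖μ‖)) :=
    (Tendsto.norm hf).log (norm_ne_zero_iff.mpr hμ)
  have hdiff : Tendsto (fun n => Real.log ‖f (n + 1)‖ - Real.log ‖f n‖) atTop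
      (nhds (Real.log ‖μ‖)) := by
    refine hlog.congr' ?_
    have hne := hf.eventually_ne_zero hμ
    filter_upwards [hne, (tendsto_add_atTop_nat 1).eventually hne] with n hn hn'
    rw [norm_div, Real.log_div (norm_ne_zero_iff.mpr hn') (norm_ne_zero_iff.mpr hn)]
  have hinit : Tendsto (fun n : ℕ => Real.log ‖f 0‖ / n) atTop (nhds 0) :=
    tendsto_const_div_atTop_nhds_zero_nat _
  have hsum := hdiff.cesaro.add hinit
  rw [add_zero] at hsum
  refine hsum.congr fun n => ?_
  rw [Finset.sum_range_sub (fun n => Real.log ‖f n‖)]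
  ring

end HasRatioLimit

end RatioLimit

section FixedPoint

theorem tendsto_zero_of_forall_eventually_le_mul {ι : Type*} {F : Filter ι} {d : ι → ℝ} {c : ℝ}
    (hc0 : 0 < c) (hc1 : c < 1) (hd : ∀ᶠ i in F, 0 ≤ d i) (hbdd : F.IsBoundedUnder (· ≤ ·) d)
    (h : ∀ B > 0, (∀ᶠ i in F, d i ≤ B) → ∀ᶠ i in F, d i ≤ c * B) :
    Tendsto d F (nhds 0) := by
  obtain ⟨B, hB⟩ := hbdd
  rw [eventually_map] at hB
  have hpow : ∀ k : ℕ, ∀ᶠ i in F, d i ≤ c ^ k * max B 1 := by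
    intro k
    induction k with
    | zero => filter_upwards [hB] with i hi using by simp [hi]
    | succ k ih =>
      filter_upwards [h _ (by positivity) ih] with i hi
      rwa [pow_succ', mul_assoc]
  have hlim : Tendsto (fun k : ℕ => c ^ k * max B 1) atTop (nhds 0) := by
    simpa using (tendsto_pow_atTop_nhds_zero_of_lt_one hc0.le hc1).mul_const (max B 1)
  refine tendsto_order.2 ⟨fun a ha => hd.mono fun i hi => ha.trans_le hi, fun a ha => ?_⟩
  obtain ⟨k, hk⟩ := (hlim.eventually (gt_mem_nhds ha)).exists
  exact (hpow k).mono fun i hi => hi.trans_lt hk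

theorem abs_mul_sub_sq_le {x y l M B : ℝ} (hx : |x| ≤ M) (hl : |l| ≤ M)
    (hxl : |x - l| ≤ B) (hyl : |y - l| ≤ B) : |x * y - l ^ 2| ≤ 2 * M * B := by
  have hM : 0 ≤ M := (abs_nonneg x).trans hx
  calc |x * y - l ^ 2| = |x * (y - l) + l * (x - l)| := by ring_nf
    _ ≤ |x| * |y - l| + |l| * |x - l| := by
      rw [← abs_mul, ← abs_mul]; exact abs_add_le _ _
    _ ≤ M * B + M * B := by gcongr
    _ = 2 * M * B := by ring

theorem mul_abs_sub_le {x y z l M A B C D δ ε : ℝ} (hC : 0 ≤ C) (hD : 0 ≤ D)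
    (hl : l * (B + C * l - D * l ^ 2) = A) (hK : 0 ≤ B + C * l - D * l ^ 2)
    (hx : |x| ≤ M) (hy : |y| ≤ M) (hlM : |l| ≤ M) (hyl : |y - l| ≤ δ) (hzl : |z - l| ≤ δ)
    (hε : |x * (B + C * y - D * (y * z)) - A| ≤ ε) :
    (B + C * l - D * l ^ 2) * |x - l| ≤ ε + M * (C + 2 * D * M) * δ := by
  have hM : 0 ≤ M := (abs_nonneg x).trans hx
  set K := B + C * l - D * l ^ 2 with hKdef
  have hcross : |C * (y - l) - D * (y * z - l ^ 2)| ≤ C * δ + D * (2 * M * δ) :=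
    calc |C * (y - l) - D * (y * z - l ^ 2)|
        ≤ |C * (y - l)| + |D * (y * z - l ^ 2)| := abs_sub _ _
      _ = C * |y - l| + D * |y * z - l ^ 2| := by
        rw [abs_mul, abs_mul, abs_of_nonneg hC, abs_of_nonneg hD]
      _ ≤ C * δ + D * (2 * M * δ) := by
        gcongr
        exact abs_mul_sub_sq_le hy hlM hyl hzl
  calc K * |x - l| = |K * (x - l)| := by rw [abs_mul, abs_of_nonneg hK]
    _ = |(x * (B + C * y - D * (y * z)) - A) - x * (C * (y - l) - D * (y * z - l ^ 2))| := by
      rw [← hl, hKdef]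
      ring_nf
    _ ≤ |x * (B + C * y - D * (y * z)) - A|
        + |x| * |C * (y - l) - D * (y * z - l ^ 2)| := by
      rw [← abs_mul]; exact abs_sub _ _
    _ ≤ ε + M * (C * δ + D * (2 * M * δ)) := by gcongr
    _ = ε + M * (C + 2 * D * M) * δ := by ring

variable {z a b c d : ℕ → ℝ} {A B C D l M : ℝ} {i j k : ℕ}

theorem tendsto_residual (ha : Tendsto a atTop (nhds A)) (hb : Tendsto b atTop (nhds B))
    (hc : Tendsto c atTop (nhds C)) (hd : Tendsto d atTop (nhds D))
    (hz : ∀ᶠ n in atTop, |z n| ≤ M)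
    (hrec : ∀ᶠ n in atTop,
      z (n + i) * (b n + c n * z (n + j) - d n * (z (n + j) * z (n + k))) = a n) :
    Tendsto (fun n => z (n + i) * (B + C * z (n + j) - D * (z (n + j) * z (n + k))) - A)
      atTop (nhds 0) := by
  have hbdd (m : ℕ) : IsBoundedUnder (· ≤ ·) atTop (norm ∘ fun n => z (n + m)) :=
    ⟨M, eventually_map.2 ((tendsto_add_atTop_nat m).eventually hz)⟩
  have hnull {f : ℕ → ℝ} {L : ℝ} (hf : Tendsto f atTop (nhds L)) :
      Tendsto (fun n => f n - L) atTop (nhds 0) := by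
    simpa using hf.sub_const L
  have hc' := (hnull hc).zero_mul_isBoundedUnder_le (hbdd j)
  have hd' := ((hnull hd).zero_mul_isBoundedUnder_le (hbdd j)).zero_mul_isBoundedUnder_le (hbdd k)
  have hbcd := (((hnull hb).add hc').sub hd')
  simp only [add_zero, sub_zero] at hbcd
  have hlim := (hnull ha).sub (hbcd.zero_mul_isBoundedUnder_le (hbdd i))
  rw [sub_zero] at hlim
  refine hlim.congr' ?_
  filter_upwards [hrec] with n hn
  linear_combination -hn

theorem tendsto_of_mul_eq (hC : 0 ≤ C) (hD : 0 ≤ D)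
    (ha : Tendsto a atTop (nhds A)) (hb : Tendsto b atTop (nhds B))
    (hc : Tendsto c atTop (nhds C)) (hd : Tendsto d atTop (nhds D))
    (hl : l * (B + C * l - D * l ^ 2) = A) (hlM : |l| ≤ M)
    (hM : M * (C + 2 * D * M) < B + C * l - D * l ^ 2)
    (hz : ∀ᶠ n in atTop, |z n| ≤ M)
    (hrec : ∀ᶠ n in atTop,
      z (n + i) * (b n + c n * z (n + j) - d n * (z (n + j) * z (n + k))) = a n) :
    Tendsto z atTop (nhds l) := by
  have hres := tendsto_residual ha hb hc hd hz hrec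
  have hM0 : 0 ≤ M := (abs_nonneg l).trans hlM
  set K := B + C * l - D * l ^ 2
  set κ := M * (C + 2 * D * M)
  have hκ : 0 ≤ κ := by positivity
  have hK : 0 < K := hκ.trans_lt hM
  have hshift {P : ℕ → Prop} (m : ℕ) (h : ∀ᶠ n in atTop, P n) : ∀ᶠ n in atTop, P (n + m) :=
    (tendsto_add_atTop_nat m).eventually h
  rw [tendsto_iff_norm_sub_tendsto_zero]
  refine tendsto_zero_of_forall_eventually_le_mul (c := (K + κ) / (2 * K)) (by positivity)
    (by rw [div_lt_one (by positivity)]; linarith) (Eventually.of_forall fun n => norm_nonneg _)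
    ⟨M + M, eventually_map.2 <| hz.mono fun n hn => (abs_sub _ _).trans (add_le_add hn hlM)⟩
    fun δ hδ hzδ => ?_
  have hε : ∀ᶠ n in atTop,
      |z (n + i) * (B + C * z (n + j) - D * (z (n + j) * z (n + k))) - A| ≤ (K - κ) / 2 * δ := by
    have hpos : 0 < (K - κ) / 2 * δ := by have := sub_pos.2 hM; positivity
    simpa using hres.abs.eventually_le_const (by simpa using hpos)
  rw [← map_add_atTop_eq_nat i, eventually_map]
  filter_upwards [hε, hshift i hz, hshift j hz, hshift j hzδ, hshift k hzδ]
    with n hn hzi hzj hzjδ hzkδ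
  have h := mul_abs_sub_le hC hD hl hK.le hzi hzj hlM hzjδ hzkδ hn
  rw [Real.norm_eq_abs, div_mul_eq_mul_div, le_div_iff₀ (by positivity)]
  linarith

end FixedPoint

section ThirdOrderRec

/-- `y` solves the linear recursion `y (n+3) = γ n * y (n+2) + β n * y (n+1) - α n * y n`. With
these signs all coefficients are positive for the recursion of the zeta series below. -/
def ThirdOrderRec {R : Type*} [Ring R] (α β γ y : ℕ → R) : Prop :=
  ∀ n, y (n + 3) = γ n * y (n + 2) + β n * y (n + 1) - α n * y n

/-- The solution of `ThirdOrderRec α β γ` with initial values `a`, `b`, `c`. -/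
def thirdOrderSolution {R : Type*} [Ring R] (α β γ : ℕ → R) (a b c : R) : ℕ → R
  | 0 => a
  | 1 => b
  | 2 => c
  | n + 3 => γ n * thirdOrderSolution α β γ a b c (n + 2)
      + β n * thirdOrderSolution α β γ a b c (n + 1) - α n * thirdOrderSolution α β γ a b c n

theorem thirdOrderRec_thirdOrderSolution {R : Type*} [Ring R] (α β γ : ℕ → R) (a b c : R) :
    ThirdOrderRec α β γ (thirdOrderSolution α β γ a b c) :=
  fun n => by rw [thirdOrderSolution]

/-- The `2 × 2` minor of the Casorati matrix of `y` and `w` on the rows `n` and `n + k`. -/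
def casoratiMinor {R : Type*} [Ring R] (y w : ℕ → R) (k n : ℕ) : R :=
  y n * w (n + k) - y (n + k) * w n

namespace ThirdOrderRec

section Ring

variable {R : Type*} [CommRing R] {α β γ y w : ℕ → R}

theorem ext (hy : ThirdOrderRec α β γ y) (hw : ThirdOrderRec α β γ w)
    (h0 : y 0 = w 0) (h1 : y 1 = w 1) (h2 : y 2 = w 2) : y = w := by
  have h : ∀ n, y n = w n ∧ y (n + 1) = w (n + 1) ∧ y (n + 2) = w (n + 2) := by
    intro n
    induction n with
    | zero => exact ⟨h0, h1, h2⟩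
    | succ n ih =>
      obtain ⟨e0, e1, e2⟩ := ih
      exact ⟨e1, e2, by rw [hy n, hw n, e0, e1, e2]⟩
  exact funext fun n => (h n).1

theorem add (hy : ThirdOrderRec α β γ y) (hw : ThirdOrderRec α β γ w) :
    ThirdOrderRec α β γ (fun n => y n + w n) :=
  fun n => by simp only [hy n, hw n]; ring

theorem sub (hy : ThirdOrderRec α β γ y) (hw : ThirdOrderRec α β γ w) :
    ThirdOrderRec α β γ (fun n => y n - w n) :=
  fun n => by simp only [hy n, hw n]; ring

theorem mul_const (hy : ThirdOrderRec α β γ y) (c : R) :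
    ThirdOrderRec α β γ (fun n => y n * c) :=
  fun n => by simp only [hy n]; ring

theorem casoratiMinor_two_succ (hy : ThirdOrderRec α β γ y) (hw : ThirdOrderRec α β γ w) (n : ℕ) :
    casoratiMinor y w 2 (n + 1)
      = γ n * casoratiMinor y w 1 (n + 1) + α n * casoratiMinor y w 1 n := by
  simp only [casoratiMinor, Nat.add_assoc, Nat.reduceAdd, hy n, hw n]
  ring

theorem casoratiMinor_one_add_two (hy : ThirdOrderRec α β γ y) (hw : ThirdOrderRec α β γ w)
    (n : ℕ) : casoratiMinor y w 1 (n + 2)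
      = α n * casoratiMinor y w 2 n - β n * casoratiMinor y w 1 (n + 1) := by
  simp only [casoratiMinor, Nat.add_assoc, Nat.reduceAdd, hy n, hw n]
  ring

end Ring

section Growth

variable {α β γ y : ℕ → ℝ} {A B C M : ℝ}

theorem monotone_of_nonneg (hy : ThirdOrderRec α β γ y) (hα : ∀ n, 0 ≤ α n)
    (hαβ : ∀ n, α n ≤ β n) (hγ : ∀ n, 1 ≤ γ n) (h0 : 0 ≤ y 0) (h1 : y 0 ≤ y 1) (h2 : y 1 ≤ y 2) :
    Monotone y := by
  have h : ∀ n, 0 ≤ y n ∧ y n ≤ y (n + 1) ∧ y (n + 1) ≤ y (n + 2) := by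
    intro n
    induction n with
    | zero => exact ⟨h0, h1, h2⟩
    | succ n ih =>
      obtain ⟨e0, e1, e2⟩ := ih
      have hβy : α n * y n ≤ β n * y (n + 1) :=
        mul_le_mul (hαβ n) e1 e0 ((hα n).trans (hαβ n))
      have hγy : 1 * y (n + 2) ≤ γ n * y (n + 2) :=
        mul_le_mul_of_nonneg_right (hγ n) (e0.trans (e1.trans e2))
      exact ⟨e0.trans e1, e2, by rw [hy n]; linarith⟩
  exact monotone_nat_of_le_succ fun n => (h n).2.1

theorem mul_le_of_monotone (hy : ThirdOrderRec α β γ y) (hα : ∀ n, 0 ≤ α n)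
    (hαβ : ∀ n, α n ≤ β n) (h0 : 0 ≤ y 0) (hmono : Monotone y) (n : ℕ) :
    γ n * y (n + 2) ≤ y (n + 3) := by
  have hβy : α n * y n ≤ β n * y (n + 1) :=
    mul_le_mul (hαβ n) (hmono n.le_succ) (h0.trans (hmono n.zero_le)) ((hα n).trans (hαβ n))
  rw [hy n]
  linarith

theorem hasRatioLimit_of_succ_le_mul {l : ℝ} (hy : ThirdOrderRec α β γ y)
    (hα : Tendsto α atTop (nhds A)) (hβ : Tendsto β atTop (nhds B)) (hγ : Tendsto γ atTop (nhds C))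
    (hC : 0 ≤ C) (hpos : ∀ n, 0 < y n) (hyM : ∀ n, y (n + 1) ≤ M * y n)
    (hl : l ^ 3 = C * l ^ 2 + B * l - A) (hlM : |l| ≤ M)
    (hM : M * (C + 2 * M) < B + C * l - l ^ 2) : HasRatioLimit y l := by
  refine tendsto_of_mul_eq (M := M) (i := 0) (j := 1) (k := 2) hC zero_le_one hα hβ hγ
    tendsto_const_nhds (by linear_combination -hl) hlM (by simpa using hM)
    (Eventually.of_forall fun n => ?_) (Eventually.of_forall fun n => ?_)
  · rw [abs_of_nonneg (div_pos (hpos _) (hpos _)).le, div_le_iff₀ (hpos n)]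
    exact hyM n
  · have hne (n : ℕ) : y n ≠ 0 := (hpos n).ne'
    have hrec := hy n
    field_simp [hne]
    linear_combination -hrec

theorem hasRatioLimit_of_le_mul_succ {s : ℝ} (hy : ThirdOrderRec α β γ y)
    (hα : Tendsto α atTop (nhds A)) (hβ : Tendsto β atTop (nhds B)) (hγ : Tendsto γ atTop (nhds C))
    (hA : 0 ≤ A) (hB : 0 ≤ B) (hpos : ∀ᶠ n in atTop, 0 < y n)
    (hyM : ∀ᶠ n in atTop, y n ≤ M * y (n + 1)) (hs : s ^ 3 = C * s ^ 2 + B * s - A)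
    (hs0 : s ≠ 0) (hsM : |s⁻¹| ≤ M) (hM : M * (B + 2 * A * M) < s) : HasRatioLimit y s := by
  have hpos' (m : ℕ) : ∀ᶠ n in atTop, 0 < y (n + m) := (tendsto_add_atTop_nat m).eventually hpos
  have hchar : C + B * s⁻¹ - A * s⁻¹ ^ 2 = s := by
    field_simp
    linear_combination -hs
  refine .of_inv (tendsto_of_mul_eq (M := M) (i := 2) (j := 1) (k := 0) hB hA
    tendsto_const_nhds hγ hβ hα (by rw [hchar, inv_mul_cancel₀ hs0]) hsM
    (by rwa [hchar]) ?_ ?_) hs0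
  · filter_upwards [hpos, hpos' 1, hyM] with n hn hn1 hnM
    rwa [abs_of_nonneg (div_pos hn hn1).le, div_le_iff₀ hn1]
  · filter_upwards [hpos' 1, hpos' 2, hpos' 3] with n hn1 hn2 hn3
    have hrec := hy n
    simp only [Nat.add_assoc, Nat.reduceAdd, add_zero]
    field_simp
    linear_combination -hrec

end Growth

end ThirdOrderRec

end ThirdOrderRec

section Coefficients

/-- The cubic factor of the outer coefficients of the recursion for the zeta series. -/
def cubic {K : Type*} [Field K] (x : K) : K :=
  41218 * x ^ 3 + 172113 * x ^ 2 + 240582 * x + 112558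

/-- The coefficients of the recursion
`recCoeff₃ n * r (n+3) = recCoeff₂ n * r (n+2) + recCoeff₁ n * r (n+1) - recCoeff₀ n * r n`
for the zeta series, found by creative telescoping. -/
def recCoeff₀ {K : Type*} [Field K] (x : K) : K :=
  2 * (2 * x + 3) * (x + 1) ^ 5 * cubic (x + 1)

/-- The coefficient of `r (n+1)` in the recursion of `recCoeff₀`. -/
def recCoeff₁ {K : Type*} [Field K] (x : K) : K :=
  2 * (48802112 * x ^ 9 + 789407136 * x ^ 8 + 5639012702 * x ^ 7 + 23351915204 * x ^ 6
    + 61795716198 * x ^ 5 + 108398618199 * x ^ 4 + 126080841295 * x ^ 3 + 93794477946 * x ^ 2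
    + 40508900959 * x + 7741215265)

/-- The coefficient of `r (n+2)` in the recursion of `recCoeff₀`. -/
def recCoeff₂ {K : Type*} [Field K] (x : K) : K :=
  2 * (x + 2) * (3874492 * x ^ 8 + 64609772 * x ^ 7 + 467449390 * x ^ 6 + 1914997100 * x ^ 5
    + 4854959850 * x ^ 4 + 7794497470 * x ^ 3 + 7734655711 * x ^ 2 + 4336014520 * x + 1051310919)

/-- The coefficient of `r (n+3)` in the recursion of `recCoeff₀`. -/
def recCoeff₃ {K : Type*} [Field K] (x : K) : K := (x + 2) * (x + 3) ^ 5 * cubic x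

/-- The normalized coefficients, so that the recursion reads `ThirdOrderRec recα recβ recγ r`. -/
def recα {K : Type*} [Field K] (n : ℕ) : K := recCoeff₀ (n : K) / recCoeff₃ (n : K)

/-- The middle normalized coefficient, see `recα`. -/
def recβ {K : Type*} [Field K] (n : ℕ) : K := recCoeff₁ (n : K) / recCoeff₃ (n : K)

/-- The leading normalized coefficient, see `recα`. -/
def recγ {K : Type*} [Field K] (n : ℕ) : K := recCoeff₂ (n : K) / recCoeff₃ (n : K)

section Positivity

variable {K : Type*} [Field K] [LinearOrder K] [IsStrictOrderedRing K] {x : K}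

theorem cubic_pos (hx : 0 ≤ x) : 0 < cubic x := by unfold cubic; positivity

theorem recCoeff₀_pos (hx : 0 ≤ x) : 0 < recCoeff₀ x := by
  have := cubic_pos (add_nonneg hx zero_le_one)
  unfold recCoeff₀
  positivity

theorem recCoeff₃_pos (hx : 0 ≤ x) : 0 < recCoeff₃ x := by
  have := cubic_pos hx
  unfold recCoeff₃
  positivity

theorem recCoeff₀_le_recCoeff₁ (hx : 0 ≤ x) : recCoeff₀ x ≤ recCoeff₁ x := by
  rw [← sub_nonneg]
  unfold recCoeff₀ recCoeff₁ cubic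
  ring_nf
  positivity

theorem recCoeff₃_le_recCoeff₂ (hx : 0 ≤ x) : recCoeff₃ x ≤ recCoeff₂ x := by
  rw [← sub_nonneg]
  unfold recCoeff₃ recCoeff₂ cubic
  ring_nf
  positivity

theorem recα_pos (n : ℕ) : (0 : K) < recα n :=
  div_pos (recCoeff₀_pos n.cast_nonneg) (recCoeff₃_pos n.cast_nonneg)

theorem recα_le_recβ (n : ℕ) : (recα n : K) ≤ recβ n :=
  div_le_div_of_nonneg_right (recCoeff₀_le_recCoeff₁ n.cast_nonneg)
    (recCoeff₃_pos n.cast_nonneg).le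

theorem one_le_recγ (n : ℕ) : (1 : K) ≤ recγ n :=
  (one_le_div (recCoeff₃_pos n.cast_nonneg)).2 (recCoeff₃_le_recCoeff₂ n.cast_nonneg)

end Positivity

theorem tendsto_div_of_reverse {P Q p q : ℝ → ℝ} (k : ℕ) (hP : ∀ x ≠ 0, P x = x ^ k * p x⁻¹)
    (hQ : ∀ x ≠ 0, Q x = x ^ k * q x⁻¹) (hp : ContinuousAt p 0) (hq : ContinuousAt q 0)
    (hq0 : q 0 ≠ 0) : Tendsto (fun n : ℕ => P n / Q n) atTop (nhds (p 0 / q 0)) := by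
  have hinv : Tendsto (fun n : ℕ => (n : ℝ)⁻¹) atTop (nhds 0) :=
    tendsto_inv_atTop_nhds_zero_nat
  refine ((hp.tendsto.comp hinv).div (hq.tendsto.comp hinv) hq0).congr' ?_
  filter_upwards [eventually_ne_atTop 0] with n hn
  have hn' : (n : ℝ) ≠ 0 := Nat.cast_ne_zero.mpr hn
  rw [hP _ hn', hQ _ hn', mul_div_mul_left _ _ (pow_ne_zero _ hn')]
  rfl

/-- The reversed polynomial `x ^ 3 * cubic (1 / x)`. -/
def cubicReverse (e : ℝ) : ℝ := 41218 + 172113 * e + 240582 * e ^ 2 + 112558 * e ^ 3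

theorem cubic_eq_reverse {x : ℝ} (hx : x ≠ 0) : cubic x = x ^ 3 * cubicReverse x⁻¹ := by
  unfold cubic cubicReverse
  field_simp

theorem tendsto_div_recCoeff₃ {P p : ℝ → ℝ} (hP : ∀ x ≠ 0, P x = x ^ 9 * p x⁻¹)
    (hp : ContinuousAt p 0) :
    Tendsto (fun n : ℕ => P n / recCoeff₃ (n : ℝ)) atTop (nhds (p 0 / 41218)) := by
  have h := tendsto_div_of_reverse (Q := recCoeff₃)
    (q := fun e => (1 + 2 * e) * (1 + 3 * e) ^ 5 * cubicReverse e) 9 hP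
    (fun x hx => by rw [recCoeff₃, cubic_eq_reverse hx]; field_simp) hp
    (by unfold cubicReverse; fun_prop) (by norm_num [cubicReverse])
  norm_num [cubicReverse] at h
  exact h

theorem tendsto_recα : Tendsto (recα : ℕ → ℝ) atTop (nhds 4) := by
  have h := tendsto_div_recCoeff₃ (P := recCoeff₀)
    (p := fun e => 2 * (2 + 3 * e) * (1 + e) ^ 5 * (41218 * (1 + e) ^ 3
      + 172113 * (1 + e) ^ 2 * e + 240582 * (1 + e) * e ^ 2 + 112558 * e ^ 3))
    (fun x hx => by unfold recCoeff₀ cubic; field_simp) (by fun_prop)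
  norm_num at h
  exact h

theorem tendsto_recβ : Tendsto (recβ : ℕ → ℝ) atTop (nhds 2368) := by
  have h := tendsto_div_recCoeff₃ (P := recCoeff₁)
    (p := fun e => 2 * (48802112 + 789407136 * e + 5639012702 * e ^ 2 + 23351915204 * e ^ 3
      + 61795716198 * e ^ 4 + 108398618199 * e ^ 5 + 126080841295 * e ^ 6 + 93794477946 * e ^ 7
      + 40508900959 * e ^ 8 + 7741215265 * e ^ 9))
    (fun x hx => by unfold recCoeff₁; field_simp) (by fun_prop)
  norm_num at h
  exact h

theorem tendsto_recγ : Tendsto (recγ : ℕ → ℝ) atTop (nhds 188) := by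
  have h := tendsto_div_recCoeff₃ (P := recCoeff₂)
    (p := fun e => 2 * (1 + 2 * e) * (3874492 + 64609772 * e + 467449390 * e ^ 2
      + 1914997100 * e ^ 3 + 4854959850 * e ^ 4 + 7794497470 * e ^ 5 + 7734655711 * e ^ 6
      + 4336014520 * e ^ 7 + 1051310919 * e ^ 8))
    (fun x hx => by unfold recCoeff₂; field_simp) (by fun_prop)
  norm_num at h
  exact h

theorem ThirdOrderRec.ratCast {y : ℕ → ℚ} (hy : ThirdOrderRec recα recβ recγ y) :
    ThirdOrderRec recα recβ recγ (fun n => (y n : ℝ)) := by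
  intro n
  simp only [hy n, recα, recβ, recγ, recCoeff₀, recCoeff₁, recCoeff₂, recCoeff₃, cubic]
  push_cast
  ring

end Coefficients

section WeightedCasoratian

/-- The weights with which the Casorati minors combine to solutions of `Rec1`. -/
def weight₁ {K : Type*} [Field K] (x : K) : K :=
  (x + 1) * (2 * x + 3) * (9299 * x ^ 4 + 55794 * x ^ 3 + 126669 * x ^ 2 + 128934 * x + 49642)
    / (4 * (2 * x + 1) * cubic x)

/-- The weight of the minors on rows `n` and `n + 2`, see `weight₁`. -/
def weight₂ {K : Type*} [Field K] (x : K) : K :=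
  98 * (x + 1) * (x + 2) ^ 5 / (4 * (2 * x + 1) * cubic x)

/-- The combination of Casorati minors of two solutions of the recursion for the zeta series that
satisfies `Rec1`. Being alternating, it eliminates one of the two zeta values. -/
def weightedCasoratian {K : Type*} [Field K] (y w : ℕ → K) (n : ℕ) : K :=
  weight₂ (n : K) * casoratiMinor y w 2 n - weight₁ (n : K) * casoratiMinor y w 1 n

-- `Rec1` for a weighted Casoratian is a relation between the minors `casoratiMinor y w 1 (m + 1)`,
-- `casoratiMinor y w 1 (m + 2)` and `casoratiMinor y w 2 (m + 1)`, whose coefficients vanish by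
-- `rec1_coeff_one_succ`, `rec1_coeff_one_add_two` and `rec1_coeff_two_succ`.
theorem rec1_coeff_one_succ (m : ℕ) :
    a1 ((m : ℚ) + 2) * weight₂ ((m : ℚ) + 2) * recα (m + 1)
      + 4 * (2 * (m : ℚ) + 3) * a2 ((m : ℚ) + 2) * weight₁ ((m : ℚ) + 1)
      = 4 * ((m : ℚ) + 1) ^ 4 * (2 * (m : ℚ) + 3) * (2 * (m : ℚ) + 1) * a0 ((m : ℚ) + 3)
        * ((weight₂ (m : ℚ) * recβ m + weight₁ (m : ℚ) * recγ m) / recα m) := by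
  have c0 := (cubic_pos (x := (m : ℚ)) (by positivity)).ne'
  have c1 := (cubic_pos (x := (m : ℚ) + 1) (by positivity)).ne'
  have c2 := (cubic_pos (x := (m : ℚ) + 2) (by positivity)).ne'
  unfold weight₁ weight₂ recα recβ recγ recCoeff₀ recCoeff₃
  push_cast
  norm_num only [add_assoc]
  field_simp
  unfold a0 a1 a2 recCoeff₁ recCoeff₂ cubic
  ring

theorem rec1_coeff_one_add_two (m : ℕ) :
    ((m : ℚ) + 3) ^ 6 * a0 ((m : ℚ) + 2)
        * (weight₂ ((m : ℚ) + 3) * (recα (m + 2) - recγ (m + 2) * recβ (m + 1))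
          + weight₁ ((m : ℚ) + 3) * recβ (m + 1))
      + a1 ((m : ℚ) + 2) * (weight₂ ((m : ℚ) + 2) * recγ (m + 1) - weight₁ ((m : ℚ) + 2))
      = 4 * ((m : ℚ) + 1) ^ 4 * (2 * (m : ℚ) + 3) * (2 * (m : ℚ) + 1) * a0 ((m : ℚ) + 3)
        * (weight₂ (m : ℚ) / recα m) := by
  have c0 := (cubic_pos (x := (m : ℚ)) (by positivity)).ne'
  have c1 := (cubic_pos (x := (m : ℚ) + 1) (by positivity)).ne'
  have c2 := (cubic_pos (x := (m : ℚ) + 2) (by positivity)).ne'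
  have c3 := (cubic_pos (x := (m : ℚ) + 3) (by positivity)).ne'
  unfold weight₁ weight₂ recα recβ recγ recCoeff₀ recCoeff₃
  push_cast
  norm_num only [add_assoc]
  field_simp
  unfold a0 a1 recCoeff₁ recCoeff₂ cubic
  ring

theorem rec1_coeff_two_succ (m : ℕ) :
    ((m : ℚ) + 3) ^ 6 * a0 ((m : ℚ) + 2)
        * ((weight₂ ((m : ℚ) + 3) * recγ (m + 2) - weight₁ ((m : ℚ) + 3)) * recα (m + 1))
      + 4 * ((m : ℚ) + 1) ^ 4 * (2 * (m : ℚ) + 3) * (2 * (m : ℚ) + 1) * a0 ((m : ℚ) + 3)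
        * (weight₁ (m : ℚ) / recα m)
      = 4 * (2 * (m : ℚ) + 3) * a2 ((m : ℚ) + 2) * weight₂ ((m : ℚ) + 1) := by
  have c0 := (cubic_pos (x := (m : ℚ)) (by positivity)).ne'
  have c1 := (cubic_pos (x := (m : ℚ) + 1) (by positivity)).ne'
  have c2 := (cubic_pos (x := (m : ℚ) + 2) (by positivity)).ne'
  have c3 := (cubic_pos (x := (m : ℚ) + 3) (by positivity)).ne'
  unfold weight₁ weight₂ recα recγ recCoeff₀ recCoeff₃
  push_cast
  norm_num only [add_assoc]
  field_simp
  unfold a0 a2 recCoeff₂ cubic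
  ring

theorem rec1_weightedCasoratian {y w : ℕ → ℚ} (hy : ThirdOrderRec recα recβ recγ y)
    (hw : ThirdOrderRec recα recβ recγ w) : Rec1 (weightedCasoratian y w) := by
  intro n hn
  obtain ⟨m, rfl⟩ := Nat.exists_eq_add_of_le' hn
  have hα : (recα m : ℚ) ≠ 0 := (recα_pos m).ne'
  set X₁ := casoratiMinor y w 1 (m + 1)
  set X₂ := casoratiMinor y w 1 (m + 2)
  set Y₁ := casoratiMinor y w 2 (m + 1)
  have hX₀ : casoratiMinor y w 1 m = (Y₁ - recγ m * X₁) / recα m := by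
    rw [eq_div_iff hα]
    linear_combination -hy.casoratiMinor_two_succ hw m
  have hY₀ : casoratiMinor y w 2 m = (X₂ + recβ m * X₁) / recα m := by
    rw [eq_div_iff hα]
    linear_combination -hy.casoratiMinor_one_add_two hw m
  have hY₂ : casoratiMinor y w 2 (m + 2) = recγ (m + 1) * X₂ + recα (m + 1) * X₁ :=
    hy.casoratiMinor_two_succ hw (m + 1)
  have hX₃ : casoratiMinor y w 1 (m + 3) = recα (m + 1) * Y₁ - recβ (m + 1) * X₂ :=
    hy.casoratiMinor_one_add_two hw (m + 1)
  have hY₃ : casoratiMinor y w 2 (m + 3)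
      = recγ (m + 2) * casoratiMinor y w 1 (m + 3) + recα (m + 2) * X₂ :=
    hy.casoratiMinor_two_succ hw (m + 2)
  have hcast : ((m + 2 : ℕ) : ℚ) + 1 = m + 3 := by push_cast; ring
  have hcast' : ((m + 2 + 1 : ℕ) : ℚ) = m + 3 := by push_cast; ring
  simp only [weightedCasoratian, Nat.add_sub_cancel, show m + 2 - 1 = m + 1 from rfl, hcast,
    hcast', show m + 2 + 1 = m + 3 from rfl]
  rw [hY₃, hX₃, hY₂, hY₀, hX₀]
  push_cast
  linear_combination X₁ * rec1_coeff_one_succ m + X₂ * rec1_coeff_one_add_two m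
    + Y₁ * rec1_coeff_two_succ m

theorem a0_add_two_pos {x : ℚ} (hx : 0 ≤ x) : 0 < a0 (x + 2) := by
  unfold a0
  ring_nf
  positivity

theorem Rec1.ext {y w : ℕ → ℚ} (hy : Rec1 y) (hw : Rec1 w)
    (h0 : y 0 = w 0) (h1 : y 1 = w 1) (h2 : y 2 = w 2) : y = w := by
  set L : ℕ → ℚ := fun m => ((m : ℚ) + 3) ^ 6 * a0 ((m : ℚ) + 2)
  have hnormalize : ∀ {f : ℕ → ℚ}, Rec1 f → ThirdOrderRec
      (fun m => -(4 * ((m : ℚ) + 1) ^ 4 * (2 * m + 3) * (2 * m + 1) * a0 ((m : ℚ) + 3)) / L m)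
      (fun m => 4 * (2 * (m : ℚ) + 3) * a2 ((m : ℚ) + 2) / L m)
      (fun m => -a1 ((m : ℚ) + 2) / L m) f := by
    intro f hf m
    have hL : L m ≠ 0 := by
      have := a0_add_two_pos (x := (m : ℚ)) m.cast_nonneg
      positivity
    have hrec := hf (m + 2) (Nat.le_add_left 2 m)
    rw [show m + 2 + 1 = m + 3 from rfl, show m + 2 - 1 = m + 1 from rfl,
      Nat.add_sub_cancel] at hrec
    push_cast at hrec
    rw [show (m : ℚ) + 2 + 1 = m + 3 by ring] at hrec
    field_simp
    simp only [L]
    linear_combination hrec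
  exact (hnormalize hy).ext (hnormalize hw) h0 h1 h2

theorem weightedCasoratian_ratCast (y w : ℕ → ℚ) (n : ℕ) :
    ((weightedCasoratian y w n : ℚ) : ℝ)
      = weightedCasoratian (fun n => (y n : ℝ)) (fun n => (w n : ℝ)) n := by
  simp only [weightedCasoratian, casoratiMinor, weight₁, weight₂, cubic]
  push_cast
  rfl

theorem tendsto_div_weight_denominator {P p : ℝ → ℝ} (hP : ∀ x ≠ 0, P x = x ^ 6 * p x⁻¹)
    (hp : ContinuousAt p 0) :
    Tendsto (fun n : ℕ => P n / (4 * (2 * (n : ℝ) + 1) * cubic (n : ℝ) * (n : ℝ) ^ 2)) atTop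
      (nhds (p 0 / 329744)) := by
  have h := tendsto_div_of_reverse (Q := fun x => 4 * (2 * x + 1) * cubic x * x ^ 2)
    (q := fun e => 4 * (2 + e) * cubicReverse e) 6 hP
    (fun x hx => by rw [cubic_eq_reverse hx]; field_simp) hp
    (by unfold cubicReverse; fun_prop) (by norm_num [cubicReverse])
  norm_num [cubicReverse] at h
  exact h

theorem tendsto_weight₁_div_sq :
    Tendsto (fun n : ℕ => weight₁ (n : ℝ) / (n : ℝ) ^ 2) atTop (nhds (9299 / 164872)) := by
  have h := tendsto_div_weight_denominator (P := fun x => (x + 1) * (2 * x + 3)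
      * (9299 * x ^ 4 + 55794 * x ^ 3 + 126669 * x ^ 2 + 128934 * x + 49642))
    (p := fun e => (1 + e) * (2 + 3 * e)
      * (9299 + 55794 * e + 126669 * e ^ 2 + 128934 * e ^ 3 + 49642 * e ^ 4))
    (fun x hx => by field_simp) (by fun_prop)
  norm_num at h
  exact h.congr fun n => (div_div _ _ _).symm

theorem tendsto_weight₂_div_sq :
    Tendsto (fun n : ℕ => weight₂ (n : ℝ) / (n : ℝ) ^ 2) atTop (nhds (49 / 164872)) := by
  have h := tendsto_div_weight_denominator (P := fun x => 98 * (x + 1) * (x + 2) ^ 5)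
    (p := fun e => 98 * (1 + e) * (1 + 2 * e) ^ 5)
    (fun x hx => by field_simp) (by fun_prop)
  norm_num at h
  exact h.congr fun n => (div_div _ _ _).symm

theorem hasRatioLimit_weightedCasoratian {y w : ℕ → ℝ} {l s : ℝ} (hy : HasRatioLimit y l)
    (hw : HasRatioLimit w s) (hl : l ≠ 0) (hs : s ≠ 0) (hls : l ≠ s)
    (hsum : 49 * (l + s) ≠ 9299) : HasRatioLimit (weightedCasoratian y w) (l * s) := by
  set g : ℕ → ℝ := fun n => weight₂ (n : ℝ) / (n : ℝ) ^ 2 * (w (n + 2) / w n - y (n + 2) / y n)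
    - weight₁ (n : ℝ) / (n : ℝ) ^ 2 * (w (n + 1) / w n - y (n + 1) / y n) with hg
  have hg_lim : Tendsto g atTop
      (nhds (49 / 164872 * (s ^ 2 - l ^ 2) - 9299 / 164872 * (s - l))) :=
    (tendsto_weight₂_div_sq.mul ((hw.two_step hs).sub (hy.two_step hl))).sub
      (tendsto_weight₁_div_sq.mul (Tendsto.sub hw hy))
  have hg_ne : 49 / 164872 * (s ^ 2 - l ^ 2) - 9299 / 164872 * (s - l) ≠ 0 := by
    rw [show 49 / 164872 * (s ^ 2 - l ^ 2) - 9299 / 164872 * (s - l)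
      = (s - l) * (49 * (l + s) - 9299) / 164872 by ring]
    exact div_ne_zero (mul_ne_zero (sub_ne_zero.2 hls.symm) (sub_ne_zero.2 hsum)) (by norm_num)
  have h := ((hy.mul hw).mul .natCast_sq).mul (.of_tendsto hg_lim hg_ne)
  rw [mul_one, mul_one] at h
  refine h.congr' ?_
  filter_upwards [eventually_ne_atTop 0, hy.eventually_ne_zero hl, hw.eventually_ne_zero hs]
    with n hn hyn hwn
  have hn' : (n : ℝ) ≠ 0 := Nat.cast_ne_zero.mpr hn
  simp only [hg, weightedCasoratian, casoratiMinor]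
  field_simp

end WeightedCasoratian

section Certificate

/-- The coefficients, as a polynomial in `t`, of the numerator `certPoly` of the
creative-telescoping certificate. -/
def certCoeff (n : ℝ) : ℕ → ℝ
  | 0 =>
    263960072 * n ^ 19 + 8236800144 * n ^ 18 + 120346738482 * n ^ 17 + 1092492715634 * n ^ 16
      + 6892630984680 * n ^ 15 + 32014509667092 * n ^ 14 + 113043947726940 * n ^ 13
      + 308574286234068 * n ^ 12 + 654218951973464 * n ^ 11 + 1068073123806588 * n ^ 10
      + 1302088233553946 * n ^ 9 + 1084011262818970 * n ^ 8 + 407019839563280 * n ^ 7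
      - 360108643691456 * n ^ 6 - 768691920363392 * n ^ 5 - 698921107778240 * n ^ 4
      - 395428992735488 * n ^ 3 - 143036230368256 * n ^ 2 - 30471243751936 * n - 2915872554496
  | 1 =>
    3545572360 * n ^ 18 + 108768928064 * n ^ 17 + 1566601630226 * n ^ 16
      + 14071316799154 * n ^ 15 + 88291552266900 * n ^ 14 + 410784268319168 * n ^ 13
      + 1467920856355366 * n ^ 12 + 4116997319116924 * n ^ 11 + 9180472065335946 * n ^ 10
      + 16383911507028690 * n ^ 9 + 23432210639505490 * n ^ 8 + 26758257724072936 * n ^ 7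
      + 24177080164457672 * n ^ 6 + 17013856710767616 * n ^ 5 + 9094420667873440 * n ^ 4
      + 3549212097738368 * n ^ 3 + 947027604003200 * n ^ 2 + 152873959328256 * n + 11079984727040
  | 2 =>
    17091950496 * n ^ 17 + 499902117152 * n ^ 16 + 6847409447276 * n ^ 15
      + 58327469435928 * n ^ 14 + 345980748059520 * n ^ 13 + 1516233526986816 * n ^ 12
      + 5082158312006860 * n ^ 11 + 13303601351393048 * n ^ 10 + 27524567187017174 * n ^ 9
      + 45246957576160088 * n ^ 8 + 59068192789835022 * n ^ 7 + 60851627966966172 * n ^ 6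
      + 48828164183168624 * n ^ 5 + 29849795351904416 * n ^ 4 + 13410170897085536 * n ^ 3
      + 4165860404724928 * n ^ 2 + 797448566453760 * n + 70643635467264
  | 3 =>
    44991260592 * n ^ 16 + 1242092300768 * n ^ 15 + 16000518811048 * n ^ 14
      + 127649304008790 * n ^ 13 + 705792624921889 * n ^ 12 + 2867427517304302 * n ^ 11
      + 8852951683536148 * n ^ 10 + 21183792551529734 * n ^ 9 + 39693909906964411 * n ^ 8
      + 58421026558295574 * n ^ 7 + 67289700850567028 * n ^ 6 + 59992470514420124 * n ^ 5
      + 40566872725819736 * n ^ 4 + 20100738889429952 * n ^ 3 + 6877762338863872 * n ^ 2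
      + 1450590562121664 * n + 141902273777280
  | 4 =>
    75155417352 * n ^ 15 + 1947027637416 * n ^ 14 + 23432182780646 * n ^ 13
      + 173766130595269 * n ^ 12 + 887904741404355 * n ^ 11 + 3311127851614962 * n ^ 10
      + 9308281992415844 * n ^ 9 + 20084452466420907 * n ^ 8 + 33530542951129061 * n ^ 7
      + 43304445854213186 * n ^ 6 + 42902419115209182 * n ^ 5 + 32011467325157004 * n ^ 4
      + 17407721582744320 * n ^ 3 + 6510595915675776 * n ^ 2 + 1496787057059552 * n
      + 159362053182912
  | 5 =>
    85186394704 * n ^ 14 + 2061362912674 * n ^ 13 + 23051912156761 * n ^ 12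
      + 157896961826863 * n ^ 11 + 740056071632215 * n ^ 10 + 2510647453657912 * n ^ 9
      + 6357400414050170 * n ^ 8 + 12205615832263223 * n ^ 7 + 17852945309971916 * n ^ 6
      + 19795910550930734 * n ^ 5 + 16378281096324056 * n ^ 4 + 9803103576502940 * n ^ 3
      + 4011998316259560 * n ^ 2 + 1004705540604336 * n + 116122850019168
  | 6 =>
    67257512718 * n ^ 13 + 1513794029433 * n ^ 12 + 15649873437993 * n ^ 11
      + 98398691570981 * n ^ 10 + 419813387057141 * n ^ 9 + 1283458466593866 * n ^ 8
      + 2892713644678556 * n ^ 7 + 4866609467133058 * n ^ 6 + 6111484006958498 * n ^ 5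
      + 5658076676938428 * n ^ 4 + 3753633590206144 * n ^ 3 + 1689732010903804 * n ^ 2
      + 462589415373392 * n + 58162079957168
  | 7 =>
    36798729694 * n ^ 12 + 767378145265 * n ^ 11 + 7297551548081 * n ^ 10
      + 41849870190327 * n ^ 9 + 161203871015017 * n ^ 8 + 439425555102546 * n ^ 7
      + 869250932074872 * n ^ 6 + 1257382904269778 * n ^ 5 + 1320095986888062 * n ^ 4
      + 981072690045396 * n ^ 3 + 489948362912264 * n ^ 2 + 147635782399900 * n + 20300796581144
  | 8 =>
    13265065286 * n ^ 11 + 255588785877 * n ^ 10 + 2226647554969 * n ^ 9 + 11578455251767 * n ^ 8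
      + 39933824588417 * n ^ 7 + 95931261000792 * n ^ 6 + 163807487395720 * n ^ 5
      + 198845168994216 * n ^ 4 + 168183978136088 * n ^ 3 + 94407898827380 * n ^ 2
      + 31658044686802 * n + 4804997987766
  | 9 =>
    2586718026 * n ^ 10 + 46273588777 * n ^ 9 + 370507523578 * n ^ 8 + 1748641169569 * n ^ 7
      + 5387380494750 * n ^ 6 + 11322056871484 * n ^ 5 + 16438604375288 * n ^ 4
      + 16282958451830 * n ^ 3 + 10531572318844 * n ^ 2 + 4016748862812 * n + 686094396522
  | 10 =>
    -83095488 * n ^ 9 - 943321832 * n ^ 8 - 3742226772 * n ^ 7 - 2620461870 * n ^ 6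
      + 28099785642 * n ^ 5 + 111848941585 * n ^ 4 + 203403926031 * n ^ 3 + 205702512659 * n ^ 2
      + 112030144409 * n + 25741322964
  | 11 =>
    -214910652 * n ^ 8 - 2991683762 * n ^ 7 - 17980305810 * n ^ 6 - 60911295258 * n ^ 5
      - 127168847019 * n ^ 4 - 167495533221 * n ^ 3 - 135862176366 * n ^ 2 - 62016950659 * n
      - 12186862569
  | 12 =>
    -68669188 * n ^ 7 - 868985726 * n ^ 6 - 4650711814 * n ^ 5 - 13639058867 * n ^ 4
      - 23665238919 * n ^ 3 - 24291175643 * n ^ 2 - 13656637449 * n - 3243612946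
  | 13 =>
    -12695144 * n ^ 6 - 143896494 * n ^ 5 - 670080901 * n ^ 4 - 1639285263 * n ^ 3
      - 2220498357 * n ^ 2 - 1578491285 * n - 459974452
  | 14 =>
    -1483848 * n ^ 5 - 14851848 * n ^ 4 - 58640562 * n ^ 3 - 113951304 * n ^ 2 - 108789306 * n
      - 40785912
  | 15 =>
    -82436 * n ^ 4 - 715188 * n ^ 3 - 2304225 * n ^ 2 - 3258328 * n - 1699413
  | _ => 0

/-- The numerator of the creative-telescoping certificate `telescopingCertificate`, found by
computer algebra. -/
def certPoly (n t : ℝ) : ℝ := ∑ i ∈ Finset.range 16, certCoeff n i * t ^ i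

theorem abs_certPoly_le (n : ℝ) {t : ℝ} (ht : 1 ≤ t) :
    |certPoly n t| ≤ (∑ i ∈ Finset.range 16, |certCoeff n i|) * t ^ 15 := by
  rw [certPoly, Finset.sum_mul]
  refine (Finset.abs_sum_le_sum_abs _ _).trans (Finset.sum_le_sum fun i hi => ?_)
  rw [abs_mul, abs_of_nonneg (by positivity : 0 ≤ t ^ i)]
  have hi' : i ≤ 15 := Nat.le_of_lt_succ (Finset.mem_range.1 hi)
  gcongr

set_option maxHeartbeats 4000000 in
-- Both sides expand to several hundred monomials in `n` and `t`.
set_option maxRecDepth 100000 in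
theorem certPoly_identity (n t : ℝ) :
    2 * (2 * n + 3) * (n + 1) * cubic (n + 1) * (2 * t + n)
        * ((t + n + 1) ^ 7 * (t + n + 2) ^ 7 * (t + n + 3) ^ 7)
      - recCoeff₁ n * (2 * t + n + 1) * (t - n - 1) * (t + 2 * n + 1) * (t + 2 * n + 2)
        * ((t + n + 2) ^ 7 * (t + n + 3) ^ 7)
      - recCoeff₂ n * (n + 2) ^ 4 * (2 * t + n + 2) * (t - n - 1) * (t - n - 2)
        * (t + 2 * n + 1) * (t + 2 * n + 2) * (t + 2 * n + 3) * (t + 2 * n + 4) * (t + n + 3) ^ 7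
      + (n + 2) * (n + 3) ^ 5 * cubic n * ((n + 2) * (n + 3)) ^ 4 * (2 * t + n + 3)
        * (t - n - 1) * (t - n - 2) * (t - n - 3) * (t + 2 * n + 1) * (t + 2 * n + 2)
        * (t + 2 * n + 3) * (t + 2 * n + 4) * (t + 2 * n + 5) * (t + 2 * n + 6)
    = t ^ 7 * (t + 2 * n + 1) * certPoly n (t + 1)
      - (t - n - 1) * (t + n + 3) ^ 7 * certPoly n t := by
  simp only [certPoly, Finset.sum_range_succ, Finset.sum_range_zero, certCoeff, cubic, recCoeff₁,
    recCoeff₂]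
  ring

end Certificate

section WellPoisedTerm

/-- The rational function `n!⁴ (t-1)⋯(t-n) (t+1)⋯(t+2n) / (t⁶ ((t+1)⋯(t+n))⁷)`. -/
def wellPoisedKernel (n : ℕ) (t : ℝ) : ℝ :=
  (∏ j ∈ Finset.range n, ((j : ℝ) + 1) ^ 4 * (t - (j + 1)) * (t + 2 * j + 1) * (t + 2 * j + 2)
    / (t + j + 1) ^ 7) / t ^ 6

/-- The very-well-poised summand of the zeta series, which runs over `t = 1, 2, 3, …`. Being
antisymmetric under `t ↦ -n - t`, it sums to a linear form in odd zeta values only. -/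
def wellPoisedTerm (n : ℕ) (t : ℝ) : ℝ := (2 * t + n) * wellPoisedKernel n t

theorem wellPoisedKernel_zero (t : ℝ) : wellPoisedKernel 0 t = 1 / t ^ 6 := by
  rw [wellPoisedKernel, Finset.prod_range_zero]

theorem wellPoisedKernel_succ (n : ℕ) (t : ℝ) :
    wellPoisedKernel (n + 1) t = wellPoisedKernel n t
      * ((n + 1) ^ 4 * (t - (n + 1)) * (t + 2 * n + 1) * (t + 2 * n + 2) / (t + n + 1) ^ 7) := by
  rw [wellPoisedKernel, wellPoisedKernel, Finset.prod_range_succ]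
  ring

theorem sub_mul_wellPoisedKernel_add_one (n : ℕ) {t : ℝ} (ht : 0 < t) :
    (t - n) * wellPoisedKernel n (t + 1)
      = wellPoisedKernel n t * (t ^ 7 * (t + 2 * n + 1) / (t + n + 1) ^ 7) := by
  induction n with
  | zero =>
    simp only [wellPoisedKernel_zero, Nat.cast_zero]
    field_simp
    ring
  | succ n ih =>
    rw [wellPoisedKernel_succ, wellPoisedKernel_succ]
    push_cast
    have h1 : t + 1 + n + 1 = t + n + 2 := by ring
    have h2 : t + (n + 1) + 1 = t + n + 2 := by ring
    rw [h1, h2]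
    calc _ = (t - n) * wellPoisedKernel n (t + 1) * ((t - (n + 1)) * ((n + 1) ^ 4
            * (t + 2 * n + 2) * (t + 2 * n + 3)) / (t + n + 2) ^ 7) := by ring
      _ = _ := by rw [ih]; ring

theorem wellPoisedKernel_eq_zero {n s : ℕ} (h : s < n) : wellPoisedKernel n (s + 1) = 0 := by
  rw [wellPoisedKernel, Finset.prod_eq_zero (Finset.mem_range.2 h) (by simp), zero_div]

theorem wellPoisedKernel_pos {n s : ℕ} (h : n ≤ s) : 0 < wellPoisedKernel n (s + 1) := by
  refine div_pos (Finset.prod_pos fun j hj => ?_) (by positivity)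
  have hjs : (j : ℝ) < s := by exact_mod_cast (Finset.mem_range.1 hj).trans_le h
  have hjs' : 0 < (s : ℝ) + 1 - (j + 1) := by linarith
  positivity

theorem wellPoisedKernel_nonneg (n s : ℕ) : 0 ≤ wellPoisedKernel n (s + 1) := by
  rcases lt_or_ge s n with h | h
  · exact (wellPoisedKernel_eq_zero h).ge
  · exact (wellPoisedKernel_pos h).le

theorem wellPoisedKernel_succ_le (n s : ℕ) :
    wellPoisedKernel (n + 1) (s + 1) ≤ wellPoisedKernel n (s + 1) * (1 / 4) := by
  rcases lt_or_ge s n with h | h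
  · rw [wellPoisedKernel_eq_zero h, wellPoisedKernel_eq_zero (h.trans n.lt_succ_self), zero_mul]
  have hns : (n : ℝ) ≤ s := by exact_mod_cast h
  rw [wellPoisedKernel_succ]
  refine mul_le_mul_of_nonneg_left ?_ (wellPoisedKernel_nonneg n s)
  set x : ℝ := s + 1 + n + 1
  have hs0 : 0 ≤ (s : ℝ) + 1 - (n + 1) := by linarith
  rw [div_le_iff₀ (by positivity)]
  calc ((n : ℝ) + 1) ^ 4 * (s + 1 - (n + 1)) * (s + 1 + 2 * n + 1) * (s + 1 + 2 * n + 2)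
      ≤ (x / 2) ^ 4 * x * (2 * x) * (2 * x) := by gcongr <;> linarith
    _ = 1 / 4 * x ^ 7 := by ring

theorem wellPoisedKernel_le (n s : ℕ) : wellPoisedKernel n (s + 1) ≤ 1 / ((s : ℝ) + 1) ^ 6 := by
  induction n with
  | zero => exact (wellPoisedKernel_zero _).le
  | succ n ih => linarith [wellPoisedKernel_succ_le n s, wellPoisedKernel_nonneg n s]

theorem wellPoisedTerm_nonneg (n s : ℕ) : 0 ≤ wellPoisedTerm n (s + 1) :=
  mul_nonneg (by positivity) (wellPoisedKernel_nonneg n s)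

theorem wellPoisedTerm_self_pos (n : ℕ) : 0 < wellPoisedTerm n (n + 1) :=
  mul_pos (by positivity) (wellPoisedKernel_pos le_rfl)

theorem wellPoisedTerm_succ_le (n s : ℕ) :
    wellPoisedTerm (n + 1) (s + 1) ≤ 1 / 2 * wellPoisedTerm n (s + 1) := by
  have := wellPoisedKernel_nonneg n s
  calc wellPoisedTerm (n + 1) (s + 1)
      ≤ (2 * (2 * ((s : ℝ) + 1) + n)) * (wellPoisedKernel n (s + 1) * (1 / 4)) := by
        rw [wellPoisedTerm]
        have := wellPoisedKernel_succ_le n s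
        have := wellPoisedKernel_nonneg (n + 1) s
        push_cast
        gcongr
        linarith
    _ = 1 / 2 * wellPoisedTerm n (s + 1) := by rw [wellPoisedTerm]; ring

theorem wellPoisedTerm_zero {t : ℝ} (ht : t ≠ 0) : wellPoisedTerm 0 t = 2 * (1 / t ^ 5) := by
  rw [wellPoisedTerm, wellPoisedKernel_zero, Nat.cast_zero]
  field_simp
  ring

theorem wellPoisedTerm_le (n s : ℕ) : wellPoisedTerm n (s + 1) ≤ 2 * (1 / ((s : ℝ) + 1) ^ 5) := by
  induction n with
  | zero => exact (wellPoisedTerm_zero (by positivity)).le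
  | succ n ih => linarith [wellPoisedTerm_succ_le n s, wellPoisedTerm_nonneg n s]

end WellPoisedTerm

section Telescoping

/-- The certificate whose forward difference in `t` is the combination of `wellPoisedTerm`s
prescribed by the recursion. -/
def telescopingCertificate (n : ℕ) (t : ℝ) : ℝ :=
  wellPoisedKernel n t
    * ((t - 1 - n) * (n + 1) ^ 4 * certPoly n t / ((t + n + 1) ^ 7 * (t + n + 2) ^ 7))

set_option maxRecDepth 4000 in
theorem wellPoisedTerm_telescoping (n : ℕ) {t : ℝ} (ht : 0 < t) :
    recCoeff₃ (n : ℝ) * wellPoisedTerm (n + 3) t - recCoeff₂ (n : ℝ) * wellPoisedTerm (n + 2) t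
      - recCoeff₁ (n : ℝ) * wellPoisedTerm (n + 1) t + recCoeff₀ (n : ℝ) * wellPoisedTerm n t
      = telescopingCertificate n (t + 1) - telescopingCertificate n t := by
  have hcert : telescopingCertificate n (t + 1)
      = wellPoisedKernel n t * (t ^ 7 * (t + 2 * n + 1) / (t + n + 1) ^ 7)
        * ((n + 1) ^ 4 * certPoly n (t + 1) / ((t + n + 2) ^ 7 * (t + n + 3) ^ 7)) := by
    rw [← sub_mul_wellPoisedKernel_add_one n ht, telescopingCertificate,
      show t + 1 + n + 1 = t + n + 2 by ring, show t + 1 + n + 2 = t + n + 3 by ring]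
    ring
  rw [hcert, telescopingCertificate, recCoeff₀, recCoeff₃]
  simp only [wellPoisedTerm, wellPoisedKernel_succ]
  push_cast
  rw [show t + (n + 1) + 1 = t + n + 2 by ring, show t + (n + 2) + 1 = t + n + 3 by ring]
  have hid := certPoly_identity n t
  have h1 : (t + n + 1) ^ 7 ≠ 0 := by positivity
  have h2 : (t + n + 2) ^ 7 ≠ 0 := by positivity
  have h3 : (t + n + 3) ^ 7 ≠ 0 := by positivity
  generalize (t + n + 1) ^ 7 = A at *
  generalize (t + n + 2) ^ 7 = B at *
  generalize (t + n + 3) ^ 7 = C at *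
  field_simp
  linear_combination wellPoisedKernel n t * hid

theorem abs_telescopingCertificate_le (n s : ℕ) :
    |telescopingCertificate n (s + 1)|
      ≤ ((n : ℝ) + 1) ^ 4 * (∑ i ∈ Finset.range 16, |certCoeff n i|) * (1 / ((s : ℝ) + 1)) := by
  set K := ∑ i ∈ Finset.range 16, |certCoeff n i|
  set t : ℝ := s + 1 with ht
  have ht1 : 1 ≤ t := by rw [ht]; linarith [s.cast_nonneg (α := ℝ)]
  have : (0 : ℝ) ≤ n := n.cast_nonneg
  have : 0 ≤ K := Finset.sum_nonneg fun i _ => abs_nonneg _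
  have hfactor : |t - 1 - n| ≤ t + n + 1 := abs_le.2 ⟨by linarith, by linarith⟩
  rw [telescopingCertificate, abs_mul, abs_div, abs_mul, abs_mul,
    abs_of_nonneg (wellPoisedKernel_nonneg n s),
    abs_of_nonneg (by positivity : 0 ≤ ((n : ℝ) + 1) ^ 4),
    abs_of_nonneg (by positivity : 0 ≤ (t + n + 1) ^ 7 * (t + n + 2) ^ 7)]
  calc wellPoisedKernel n t * (|t - 1 - n| * (n + 1) ^ 4 * |certPoly n t|
        / ((t + n + 1) ^ 7 * (t + n + 2) ^ 7))
      ≤ 1 / t ^ 6 * ((t + n + 1) * (n + 1) ^ 4 * (K * t ^ 15)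
        / ((t + n + 1) * t ^ 6 * t ^ 7)) := by
        have := wellPoisedKernel_le n s
        have := abs_certPoly_le n ht1
        rw [pow_succ' (t + n + 1) 6]
        gcongr <;> linarith
    _ = (n + 1) ^ 4 * K * (1 / t ^ 4) := by field_simp
    _ ≤ (n + 1) ^ 4 * K * (1 / t) := by
        gcongr
        exact le_self_pow₀ ht1 (by norm_num)

theorem tendsto_telescopingCertificate (n : ℕ) :
    Tendsto (fun s : ℕ => telescopingCertificate n (s + 1)) atTop (nhds 0) := by
  refine squeeze_zero_norm (abs_telescopingCertificate_le n) ?_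
  simpa only [mul_zero] using
    (tendsto_one_div_add_atTop_nhds_zero_nat (𝕜 := ℝ)).const_mul _

theorem telescopingCertificate_one (n : ℕ) : telescopingCertificate n 1 = 0 := by
  rw [telescopingCertificate]
  cases n with
  | zero => simp
  | succ n =>
    have h := wellPoisedKernel_eq_zero n.succ_pos
    rw [Nat.cast_zero, zero_add] at h
    rw [h, zero_mul]

end Telescoping

section Series

theorem tsum_eq_neg_of_telescoping {G : Type*} [AddCommGroup G] [TopologicalSpace G]
    [IsTopologicalAddGroup G] [T2Space G] {f H : ℕ → G} (hf : Summable f)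
    (hH : Tendsto H atTop (nhds 0)) (h : ∀ s, f s = H (s + 1) - H s) : ∑' s, f s = -H 0 := by
  have hsum : ∀ N, ∑ i ∈ Finset.range N, f i = H N - H 0 := fun N => by
    simp_rw [h, Finset.sum_range_sub]
  have hlim := hH.sub_const (H 0)
  rw [zero_sub] at hlim
  exact tendsto_nhds_unique hf.hasSum.tendsto_sum_nat (hlim.congr fun N => (hsum N).symm)

theorem summable_one_div_succ_pow {k : ℕ} (hk : 1 < k) :
    Summable fun s : ℕ => 1 / ((s : ℝ) + 1) ^ k := by
  simpa using (summable_nat_add_iff (f := fun s : ℕ => 1 / (s : ℝ) ^ k) 1).2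
    (Real.summable_one_div_nat_pow.2 hk)

theorem hasSum_zetaRe {k : ℕ} (hk : 1 < k) :
    HasSum (fun s : ℕ => 1 / ((s : ℝ) + 1) ^ k) (zetaRe k) := by
  have hzeta : zetaRe k = ∑' s : ℕ, 1 / (s : ℝ) ^ k := by
    rw [zetaRe, zeta_nat_eq_tsum_of_gt_one hk, ← Complex.ofReal_re (∑' s : ℕ, 1 / (s : ℝ) ^ k)]
    push_cast
    rfl
  rw [hzeta, (Real.summable_one_div_nat_pow.2 hk).tsum_eq_zero_add]
  simpa [(zero_lt_one.trans hk).ne'] using (summable_one_div_succ_pow hk).hasSum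

theorem summable_wellPoisedTerm (n : ℕ) : Summable fun s : ℕ => wellPoisedTerm n (s + 1) :=
  Summable.of_nonneg_of_le (wellPoisedTerm_nonneg n) (wellPoisedTerm_le n)
    ((summable_one_div_succ_pow (by norm_num)).mul_left 2)

/-- The very-well-poised series representing a linear form in `1`, `ζ(3)` and `ζ(5)`. -/
def wellPoisedSeries (n : ℕ) : ℝ := ∑' s : ℕ, wellPoisedTerm n (s + 1)

theorem wellPoisedSeries_pos (n : ℕ) : 0 < wellPoisedSeries n :=
  (summable_wellPoisedTerm n).tsum_pos (wellPoisedTerm_nonneg n) n (wellPoisedTerm_self_pos n)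

theorem wellPoisedSeries_succ_le (n : ℕ) :
    wellPoisedSeries (n + 1) ≤ 1 / 2 * wellPoisedSeries n := by
  rw [wellPoisedSeries, wellPoisedSeries, ← tsum_mul_left]
  exact (summable_wellPoisedTerm (n + 1)).tsum_le_tsum (wellPoisedTerm_succ_le n)
    ((summable_wellPoisedTerm n).mul_left _)

theorem thirdOrderRec_wellPoisedSeries : ThirdOrderRec recα recβ recγ wellPoisedSeries := by
  intro n
  have h0 := (summable_wellPoisedTerm n).mul_left (recCoeff₀ (n : ℝ))
  have h1 := (summable_wellPoisedTerm (n + 1)).mul_left (recCoeff₁ (n : ℝ))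
  have h2 := (summable_wellPoisedTerm (n + 2)).mul_left (recCoeff₂ (n : ℝ))
  have h3 := (summable_wellPoisedTerm (n + 3)).mul_left (recCoeff₃ (n : ℝ))
  have h := tsum_eq_neg_of_telescoping (((h3.sub h2).sub h1).add h0)
    (tendsto_telescopingCertificate n) fun s => by
      rw [wellPoisedTerm_telescoping n (by positivity : (0 : ℝ) < s + 1), Nat.cast_succ]
  rw [((h3.sub h2).sub h1).tsum_add h0, (h3.sub h2).tsum_sub h1, h3.tsum_sub h2, tsum_mul_left,
    tsum_mul_left, tsum_mul_left, tsum_mul_left, Nat.cast_zero, zero_add,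
    telescopingCertificate_one, neg_zero] at h
  have hne : recCoeff₃ (n : ℝ) ≠ 0 := (recCoeff₃_pos n.cast_nonneg).ne'
  unfold wellPoisedSeries recα recβ recγ
  field_simp
  linear_combination h

theorem wellPoisedSeries_zero : wellPoisedSeries 0 = 2 * zetaRe 5 := by
  have h (s : ℕ) : wellPoisedTerm 0 (s + 1) = 2 * (1 / ((s : ℝ) + 1) ^ 5) :=
    wellPoisedTerm_zero (by positivity)
  simp_rw [wellPoisedSeries, h]
  rw [tsum_mul_left, (hasSum_zetaRe (by norm_num)).tsum_eq]

theorem wellPoisedSeries_eq_of_telescoping {n : ℕ} {a b : ℝ} {H : ℝ → ℝ}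
    (hH : Tendsto (fun s : ℕ => H (s + 1)) atTop (nhds 0))
    (h : ∀ t > 0, wellPoisedTerm n t = a * (1 / t ^ 5) + b * (1 / t ^ 3) + (H (t + 1) - H t)) :
    wellPoisedSeries n = a * zetaRe 5 + b * zetaRe 3 - H 1 := by
  have hzeta := ((hasSum_zetaRe (k := 5) (by norm_num)).mul_left a).add
    ((hasSum_zetaRe (k := 3) (by norm_num)).mul_left b)
  have hdiff := (summable_wellPoisedTerm n).hasSum.sub hzeta
  have htsum := tsum_eq_neg_of_telescoping hdiff.summable hH fun s => by
    rw [h _ (by positivity : (0 : ℝ) < s + 1), Nat.cast_succ]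
    ring
  rw [hdiff.tsum_eq, Nat.cast_zero, zero_add] at htsum
  rw [wellPoisedSeries]
  linear_combination htsum

theorem wellPoisedSeries_one : wellPoisedSeries 1 = 18 * zetaRe 5 + 66 * zetaRe 3 - 98 := by
  let P : ℝ → ℝ := fun x => 33 * x ^ 2 + 33 * x ^ 3 + 21 * x ^ 4 + 9 * x ^ 5 + 2 * x ^ 6
  have hP : Continuous P := by fun_prop
  rw [wellPoisedSeries_eq_of_telescoping (a := 18) (b := 66) (H := fun t => P (1 / t))]
  · norm_num [P]
  · have h := (hP.tendsto 0).comp (tendsto_one_div_add_atTop_nhds_zero_nat (𝕜 := ℝ))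
    simpa [P, Function.comp_def] using h
  · intro t ht
    simp only [P, wellPoisedTerm, wellPoisedKernel_succ, wellPoisedKernel_zero]
    field_simp
    push_cast
    ring

theorem wellPoisedSeries_two :
    wellPoisedSeries 2 = 938 * zetaRe 5 + 6125 / 2 * zetaRe 3 - 74463 / 16 := by
  let P : ℝ × ℝ → ℝ := fun x => 10864 * (x.1 - x.2) - 37331 / 8 * (x.1 ^ 2 + x.2 ^ 2)
    + 19117 / 4 * x.1 ^ 3 - 6867 / 4 * x.2 ^ 3 - 1015 / 2 * (x.1 ^ 4 + x.2 ^ 4)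
    + 1045 * x.1 ^ 5 - 107 * x.2 ^ 5 - 12 * (x.1 ^ 6 + x.2 ^ 6)
  have hP : Continuous P := by fun_prop
  rw [wellPoisedSeries_eq_of_telescoping (a := 938) (b := 6125 / 2)
    (H := fun t => P (1 / t, 1 / (t + 1)))]
  · norm_num [P]
  · have hinv := tendsto_one_div_add_atTop_nhds_zero_nat (𝕜 := ℝ)
    have h := (hP.tendsto (0, 0)).comp
      (hinv.prodMk_nhds (hinv.comp (tendsto_add_atTop_nat 1)))
    simpa [P, Function.comp_def] using h
  · intro t ht
    simp only [P, wellPoisedTerm, wellPoisedKernel_succ, wellPoisedKernel_zero]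
    norm_num [add_assoc]
    field_simp
    ring

end Series

section LinearForms

/-- The rational coefficients in `wellPoisedSeries n = zeta₅Coeff n * ζ(5) + zeta₃Coeff n * ζ(3)
- constCoeff n`, produced by the common recursion. -/
def zeta₅Coeff : ℕ → ℚ := thirdOrderSolution recα recβ recγ 2 18 938

/-- The coefficient of `ζ(3)` in the zeta series, see `zeta₅Coeff`. -/
def zeta₃Coeff : ℕ → ℚ := thirdOrderSolution recα recβ recγ 0 66 (6125 / 2)

/-- The rational part of the zeta series up to sign, see `zeta₅Coeff`. -/
def constCoeff : ℕ → ℚ := thirdOrderSolution recα recβ recγ 0 98 (74463 / 16)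

theorem thirdOrderRec_zeta₅Coeff : ThirdOrderRec recα recβ recγ zeta₅Coeff :=
  thirdOrderRec_thirdOrderSolution _ _ _ _ _ _

theorem thirdOrderRec_zeta₃Coeff : ThirdOrderRec recα recβ recγ zeta₃Coeff :=
  thirdOrderRec_thirdOrderSolution _ _ _ _ _ _

theorem thirdOrderRec_constCoeff : ThirdOrderRec recα recβ recγ constCoeff :=
  thirdOrderRec_thirdOrderSolution _ _ _ _ _ _

theorem wellPoisedSeries_eq : wellPoisedSeries
    = fun n => zeta₅Coeff n * zetaRe 5 + zeta₃Coeff n * zetaRe 3 - constCoeff n := by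
  refine thirdOrderRec_wellPoisedSeries.ext
    (((thirdOrderRec_zeta₅Coeff.ratCast.mul_const _).add
      (thirdOrderRec_zeta₃Coeff.ratCast.mul_const _)).sub thirdOrderRec_constCoeff.ratCast) ?_ ?_ ?_
  · rw [wellPoisedSeries_zero]
    norm_num [zeta₅Coeff, zeta₃Coeff, constCoeff, thirdOrderSolution]
  · rw [wellPoisedSeries_one]
    norm_num [zeta₅Coeff, zeta₃Coeff, constCoeff, thirdOrderSolution]
  · rw [wellPoisedSeries_two]
    norm_num [zeta₅Coeff, zeta₃Coeff, constCoeff, thirdOrderSolution]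

theorem weightedCasoratian_wellPoisedSeries_zeta₃Coeff (n : ℕ) :
    weightedCasoratian wellPoisedSeries (fun n => (zeta₃Coeff n : ℝ)) n
      = (weightedCasoratian zeta₅Coeff zeta₃Coeff n : ℚ) * zetaRe 5
        - (weightedCasoratian constCoeff zeta₃Coeff n : ℚ) := by
  rw [wellPoisedSeries_eq, weightedCasoratian_ratCast, weightedCasoratian_ratCast]
  simp only [weightedCasoratian, casoratiMinor]
  ring

theorem weightedCasoratian_zeta₅Coeff_wellPoisedSeries (n : ℕ) :
    weightedCasoratian (fun n => (zeta₅Coeff n : ℝ)) wellPoisedSeries n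
      = (weightedCasoratian zeta₅Coeff zeta₃Coeff n : ℚ) * zetaRe 3
        - (weightedCasoratian zeta₅Coeff constCoeff n : ℚ) := by
  rw [wellPoisedSeries_eq, weightedCasoratian_ratCast, weightedCasoratian_ratCast]
  simp only [weightedCasoratian, casoratiMinor]
  ring

theorem eq_weightedCasoratian_zeta₅Coeff_zeta₃Coeff {q : ℕ → ℚ} (hq : Rec1 q) (hq0 : q 0 = -1)
    (hq1 : q 1 = 42) (hq2 : q 2 = -17934) : q = weightedCasoratian zeta₅Coeff zeta₃Coeff := by
  have h := rec1_weightedCasoratian thirdOrderRec_zeta₅Coeff thirdOrderRec_zeta₃Coeff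
  refine hq.ext h ?_ ?_ ?_ <;>
  norm_num [hq0, hq1, hq2, weightedCasoratian, casoratiMinor, weight₁, weight₂, cubic, zeta₅Coeff,
    zeta₃Coeff, thirdOrderSolution, recα, recβ, recγ, recCoeff₀, recCoeff₁, recCoeff₂, recCoeff₃]

theorem eq_weightedCasoratian_constCoeff_zeta₃Coeff {p : ℕ → ℚ} (hp : Rec1 p) (hp0 : p 0 = 0)
    (hp1 : p 1 = 87 / 2) (hp2 : p 2 = -1190161 / 64) :
    p = weightedCasoratian constCoeff zeta₃Coeff := by
  have h := rec1_weightedCasoratian thirdOrderRec_constCoeff thirdOrderRec_zeta₃Coeff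
  refine hp.ext h ?_ ?_ ?_ <;>
  norm_num [hp0, hp1, hp2, weightedCasoratian, casoratiMinor, weight₁, weight₂, cubic, constCoeff,
    zeta₃Coeff, thirdOrderSolution, recα, recβ, recγ, recCoeff₀, recCoeff₁, recCoeff₂, recCoeff₃]

theorem eq_weightedCasoratian_zeta₅Coeff_constCoeff {p : ℕ → ℚ} (hp : Rec1 p) (hp0 : p 0 = 0)
    (hp1 : p 1 = 101 / 2) (hp2 : p 2 = -344923 / 16) :
    p = weightedCasoratian zeta₅Coeff constCoeff := by
  have h := rec1_weightedCasoratian thirdOrderRec_zeta₅Coeff thirdOrderRec_constCoeff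
  refine hp.ext h ?_ ?_ ?_ <;>
  norm_num [hp0, hp1, hp2, weightedCasoratian, casoratiMinor, weight₁, weight₂, cubic, constCoeff,
    zeta₅Coeff, thirdOrderSolution, recα, recβ, recγ, recCoeff₀, recCoeff₁, recCoeff₂, recCoeff₃]

end LinearForms

section Asymptotics

theorem hasRatioLimit_wellPoisedSeries {l : ℝ} (hl : l ^ 3 = 188 * l ^ 2 + 2368 * l - 4)
    (hl0 : 0 < l) (hl1 : l < 1 / 100) : HasRatioLimit wellPoisedSeries l := by
  refine thirdOrderRec_wellPoisedSeries.hasRatioLimit_of_succ_le_mul tendsto_recα tendsto_recβ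
    tendsto_recγ (by norm_num) wellPoisedSeries_pos wellPoisedSeries_succ_le hl ?_ ?_
  · rw [abs_of_pos hl0]
    linarith
  · nlinarith

theorem ThirdOrderRec.hasRatioLimit_of_monotone {y : ℕ → ℝ} {s : ℝ}
    (hy : ThirdOrderRec recα recβ recγ y) (hs : s ^ 3 = 188 * s ^ 2 + 2368 * s - 4)
    (hs1 : 100 < s) (h0 : 0 ≤ y 0) (h1 : y 0 < y 1) (h2 : y 1 ≤ y 2) : HasRatioLimit y s := by
  have hα (n : ℕ) : (0 : ℝ) ≤ recα n := (recα_pos n).le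
  have hmono := hy.monotone_of_nonneg hα recα_le_recβ one_le_recγ h0 h1.le h2
  have hpos : ∀ᶠ n in atTop, 0 < y n := by
    filter_upwards [eventually_ge_atTop 1] with n hn
    exact (h0.trans_lt h1).trans_le (hmono hn)
  refine hy.hasRatioLimit_of_le_mul_succ (M := 1 / 100) tendsto_recα tendsto_recβ tendsto_recγ
    (by norm_num) (by norm_num) hpos ?_ hs (by positivity) ?_ (by linarith)
  · rw [← map_add_atTop_eq_nat 2, eventually_map]
    filter_upwards [tendsto_recγ.eventually (lt_mem_nhds (by norm_num : (100 : ℝ) < 188)),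
      (tendsto_add_atTop_nat 2).eventually hpos] with n hn hpos
    have := hy.mul_le_of_monotone hα recα_le_recβ h0 hmono n
    nlinarith
  · rw [abs_of_pos (by positivity)]
    exact (inv_le_of_inv_le₀ (by norm_num) (by linarith))

theorem cubic_eq_of_quadratic_eq {μ x : ℝ} (hμ0 : μ ≠ 0)
    (hμ : μ ^ 3 + 2368 * μ ^ 2 - 752 * μ - 16 = 0) (hx : x ^ 2 = (188 + 4 / μ) * x - μ) :
    x ^ 3 = 188 * x ^ 2 + 2368 * x - 4 := by
  have hcoeff : (188 + 4 / μ) * (4 / μ) = μ + 2368 := by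
    field_simp
    linear_combination -hμ
  have hconst : μ * (4 / μ) = 4 := mul_div_cancel₀ _ hμ0
  linear_combination (x + 4 / μ) * hx + x * hcoeff - hconst

theorem exists_roots_mul_eq {μ : ℝ} (hμ0 : 0 < μ) (hμ1 : μ < 1)
    (hμ : μ ^ 3 + 2368 * μ ^ 2 - 752 * μ - 16 = 0) :
    ∃ l s : ℝ, (l ^ 3 = 188 * l ^ 2 + 2368 * l - 4 ∧ 0 < l ∧ l < 1 / 100)
      ∧ (s ^ 3 = 188 * s ^ 2 + 2368 * s - 4 ∧ 190 < s) ∧ l * s = μ := by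
  -- By Vieta, `-4 / μ` is the third root, and the other two have sum `σ` and product `μ`.
  set σ := 188 + 4 / μ
  have hσ192 : 192 < σ := by
    have : 4 < 4 / μ := (lt_div_iff₀ hμ0).2 (by linarith)
    linarith
  have hdisc : 190 ^ 2 ≤ σ ^ 2 - 4 * μ := by nlinarith
  have hsqrt := Real.sq_sqrt ((sq_nonneg _).trans hdisc)
  have hsqrt190 : 190 ≤ √(σ ^ 2 - 4 * μ) := Real.le_sqrt_of_sq_le hdisc
  set d := √(σ ^ 2 - 4 * μ)
  have hmul : (σ - d) / 2 * ((σ + d) / 2) = μ := by linear_combination -hsqrt / 4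
  have hs : 190 < (σ + d) / 2 := by linarith
  have hl : 0 < (σ - d) / 2 := pos_of_mul_pos_left (hmul ▸ hμ0) (by linarith)
  refine ⟨(σ - d) / 2, (σ + d) / 2,
    ⟨cubic_eq_of_quadratic_eq hμ0.ne' hμ ?_, hl, by nlinarith⟩,
    ⟨cubic_eq_of_quadratic_eq hμ0.ne' hμ ?_, hs⟩, hmul⟩
  all_goals linear_combination hsqrt / 4

theorem hasRatioLimit_zeta₅Coeff {s : ℝ} (hs : s ^ 3 = 188 * s ^ 2 + 2368 * s - 4)
    (hs100 : 100 < s) : HasRatioLimit (fun n => (zeta₅Coeff n : ℝ)) s := by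
  refine thirdOrderRec_zeta₅Coeff.ratCast.hasRatioLimit_of_monotone hs hs100 ?_ ?_ ?_ <;>
  norm_num [zeta₅Coeff, thirdOrderSolution]

theorem hasRatioLimit_zeta₃Coeff {s : ℝ} (hs : s ^ 3 = 188 * s ^ 2 + 2368 * s - 4)
    (hs100 : 100 < s) : HasRatioLimit (fun n => (zeta₃Coeff n : ℝ)) s := by
  refine thirdOrderRec_zeta₃Coeff.ratCast.hasRatioLimit_of_monotone hs hs100 ?_ ?_ ?_ <;>
  norm_num [zeta₃Coeff, thirdOrderSolution]

theorem hasRatioLimit_linearForms {μ : ℝ} (hμ0 : 0 < μ) (hμ1 : μ < 1)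
    (hμ : μ ^ 3 + 2368 * μ ^ 2 - 752 * μ - 16 = 0) :
    HasRatioLimit (weightedCasoratian wellPoisedSeries fun n => (zeta₃Coeff n : ℝ)) μ ∧
      HasRatioLimit (weightedCasoratian (fun n => (zeta₅Coeff n : ℝ)) wellPoisedSeries) μ := by
  obtain ⟨l, s, ⟨hl, hl0, hl1⟩, ⟨hs, hs190⟩, rfl⟩ := exists_roots_mul_eq hμ0 hμ1 hμ
  have hs0 : 0 < s := by linarith
  have hr := hasRatioLimit_wellPoisedSeries hl hl0 hl1
  have hu := hasRatioLimit_zeta₅Coeff hs (by linarith)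
  have hw := hasRatioLimit_zeta₃Coeff hs (by linarith)
  refine ⟨hasRatioLimit_weightedCasoratian hr hw hl0.ne' hs0.ne' (by linarith) (by linarith), ?_⟩
  rw [mul_comm]
  exact hasRatioLimit_weightedCasoratian hu hr hs0.ne' hl0.ne' (by linarith) (by linarith)

end Asymptotics

/-- `lim (log |ℓ_n|)/n = lim (log |ℓ̃_n|)/n = log μ₂`, where `μ₂` is the (unique) root of
`μ³ + 2368 μ² − 752 μ − 16` lying in the interval `(0.337, 0.338)`. -/
theorem stmt1
    (q p pt : ℕ → ℚ)
    (hq : Rec1 q) (hp : Rec1 p) (hpt : Rec1 pt)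
    (hq0 : q 0 = -1) (hq1 : q 1 = 42) (hq2 : q 2 = -17934)
    (hp0 : p 0 = 0) (hp1 : p 1 = 87/2) (hp2 : p 2 = -1190161/64)
    (hpt0 : pt 0 = 0) (hpt1 : pt 1 = 101/2) (hpt2 : pt 2 = -344923/16)
    (μ2 : ℝ) (hμ2root : μ2^3 + 2368*μ2^2 - 752*μ2 - 16 = 0)
    (hμ2mem : μ2 ∈ Set.Ioo (0.337 : ℝ) 0.338) :
    Tendsto (fun n : ℕ => Real.log |(q n : ℝ) * zetaRe 5 - (p n : ℝ)| / (n : ℝ))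
      atTop (nhds (Real.log μ2)) ∧
    Tendsto (fun n : ℕ => Real.log |(q n : ℝ) * zetaRe 3 - (pt n : ℝ)| / (n : ℝ))
      atTop (nhds (Real.log μ2)) := by
  have hμ0 : 0 < μ2 := by linarith [hμ2mem.1]
  have hμ1 : μ2 < 1 := by linarith [hμ2mem.2]
  obtain ⟨hl, hlt⟩ := hasRatioLimit_linearForms hμ0 hμ1 hμ2root
  have hloglim := hl.tendsto_log_norm_div hμ0.ne'
  have hloglimt := hlt.tendsto_log_norm_div hμ0.ne'
  simp only [Real.norm_eq_abs, abs_of_pos hμ0] at hloglim hloglimt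
  rw [eq_weightedCasoratian_zeta₅Coeff_zeta₃Coeff hq hq0 hq1 hq2,
    eq_weightedCasoratian_constCoeff_zeta₃Coeff hp hp0 hp1 hp2,
    eq_weightedCasoratian_zeta₅Coeff_constCoeff hpt hpt0 hpt1 hpt2]
  simp only [← weightedCasoratian_wellPoisedSeries_zeta₃Coeff,
    ← weightedCasoratian_zeta₅Coeff_wellPoisedSeries]
  exact ⟨hloglim, hloglimt⟩
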